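/- For n ≥ 3, r ∈ [0,1), and x ∈ B^n, the normalized surface integral ∫_{S^{n−1}} |rx − ζ|^{−(n+2)} dσ(ζ) equals F((n+2)/2, 2; n/2; r²|x|²), where σ is the normalized Lebesgue surface measure on the unit sphere S^{n−1} and F is the Gauss hypergeometric function. -/

import Mathlib

open Real Set Metric MeasureTheory

/-- The Gauss hypergeometric function `F(a,b;c;x)` as a power series in `x`. -/
noncomputable def hyperF (a b c x : ℝ) : ℝ :=
  ∑' k : ℕ, ((ascPochhammer ℝ k).eval a * (ascPochhammer ℝ k).eval b /
    (ascPochhammer ℝ k).eval c) * x ^ k / (Nat.factorial k)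

/-- The normalized (total mass one) surface measure on the unit sphere of `ℝⁿ`. -/
noncomputable def sphereMeasureNormalized (n : ℕ) :
    Measure (sphere (0 : EuclideanSpace ℝ (Fin n)) 1) :=
  ((volume : Measure (EuclideanSpace ℝ (Fin n))).toSphere Set.univ)⁻¹ •
    (volume : Measure (EuclideanSpace ℝ (Fin n))).toSphere

/-!
For `‖ζ‖ = 1` one has `‖y - ζ‖ ^ 2 = (1 + ‖y‖ ^ 2) (1 - ⟪a, ζ⟫)` with `a = 2 y / (1 + ‖y‖ ^ 2)`,
so the mean of `‖y - ζ‖ ^ (-2 s)` is obtained by expanding `(1 - ⟪a, ζ⟫) ^ (-s)` binomially. The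
moments of the linear form `⟪a, ·⟫` over the sphere come from those of the Gaussian
`exp (-‖x‖ ^ 2)`, which satisfy a recursion by integration by parts; with `c = d / 2`, where `d` is
the dimension, the series becomes `(1 + q) ^ (-s) * F (s / 2, (s + 1) / 2; c; 4 q / (1 + q) ^ 2)`
for `q = ‖y‖ ^ 2`. Gauss's quadratic transformation turns this into `F (s, s - c + 1; c; q)`. Near
`q = 0` it is a rearrangement of a double series followed by Chu–Vandermonde summation of the
coefficients; both sides being analytic in `q`, it extends to all of `[0, 1)`.
-/

section Pochhammer

open Finset Polynomial
open scoped Nat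

theorem ascPochhammer_eval_mul_eval_add {R : Type*} [CommSemiring R] (n m : ℕ) (r : R) :
    (ascPochhammer R n).eval r * (ascPochhammer R m).eval (r + n) =
      (ascPochhammer R (n + m)).eval r := by
  simp [← ascPochhammer_mul]

theorem ascPochhammer_eval_add {R : Type*} [CommSemiring R] (n : ℕ) (r t : R) :
    (ascPochhammer R n).eval (r + t) = ∑ ij ∈ antidiagonal n,
      (n.choose ij.1 : R) * ((ascPochhammer R ij.1).eval r * (ascPochhammer R ij.2).eval t) := by
  induction n with
  | zero => simp
  | succ n ih =>
    rw [sum_antidiagonal_choose_succ_mul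
        fun i j ↦ (ascPochhammer R i).eval r * (ascPochhammer R j).eval t,
      ascPochhammer_succ_eval, ih, sum_mul, ← sum_add_distrib]
    refine sum_congr rfl fun ⟨i, j⟩ hij ↦ ?_
    obtain rfl : i + j = n := mem_antidiagonal.mp hij
    simp only [ascPochhammer_succ_eval, (Nat.choose_symm_add : (i + j).choose i = _), Nat.cast_add]
    ring

theorem neg_one_pow_mul_ascPochhammer_eval {R : Type*} [CommRing R] (n : ℕ) (r : R) :
    (-1) ^ n * (ascPochhammer R n).eval r = (ascPochhammer R n).eval (1 - r - n) := by
  rw [← neg_neg r, ascPochhammer_eval_neg_eq_descPochhammer, descPochhammer_eval_eq_ascPochhammer,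
    ← mul_assoc, ← mul_pow, neg_one_mul, neg_neg, one_pow, one_mul]
  ring_nf

theorem ascPochhammer_eval_two_mul {K : Type*} [Field K] [NeZero (2 : K)] (n : ℕ) (r : K) :
    (ascPochhammer K (2 * n)).eval r =
      4 ^ n * ((ascPochhammer K n).eval (r / 2) * (ascPochhammer K n).eval ((r + 1) / 2)) := by
  induction n with
  | zero => simp
  | succ n ih =>
    rw [mul_add_one, ascPochhammer_succ_eval, ascPochhammer_succ_eval, ih, ascPochhammer_succ_eval,
      ascPochhammer_succ_eval]
    have : (2 : K) ≠ 0 := two_ne_zero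
    push_cast
    field_simp
    ring

theorem abs_ascPochhammer_eval_le {R : Type*} [CommRing R] [LinearOrder R] [IsStrictOrderedRing R]
    (n : ℕ) (r : R) : |(ascPochhammer R n).eval r| ≤ (ascPochhammer R n).eval |r| := by
  induction n with
  | zero => simp
  | succ n ih =>
    rw [ascPochhammer_succ_eval, ascPochhammer_succ_eval, abs_mul]
    have h_factor : |r + n| ≤ |r| + n := (abs_add_le r n).trans_eq (by rw [Nat.abs_cast])
    exact mul_le_mul ih h_factor (abs_nonneg _) ((abs_nonneg _).trans ih)

theorem ascPochhammer_eval_abs_nonneg {R : Type*} [CommRing R] [LinearOrder R]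
    [IsStrictOrderedRing R] (n : ℕ) (r : R) : 0 ≤ (ascPochhammer R n).eval |r| :=
  (abs_nonneg _).trans (abs_ascPochhammer_eval_le n r)

/-- Clearing denominators and reflecting `(c + i)_j` turns this into the Chu–Vandermonde identity
`ascPochhammer_eval_add` for `s - c + 1 = (s + n) + (1 - c - n)`. -/
theorem sum_antidiagonal_ascPochhammer_two_mul_add {K : Type*} [Field K] [CharZero K] {c : K}
    (hc : ∀ k : ℕ, (k : K) ≠ -c) (n : ℕ) (s : K) :
    ∑ ij ∈ antidiagonal n, (-1) ^ ij.2 * (ascPochhammer K (2 * ij.1 + ij.2)).eval s /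
        (ij.1 ! * (ascPochhammer K ij.1).eval c * ij.2 !) =
      (ascPochhammer K n).eval s * (ascPochhammer K n).eval (s - c + 1) /
        (n ! * (ascPochhammer K n).eval c) := by
  have hc_ne (k : ℕ) (i : ℕ) : (ascPochhammer K k).eval (c + i) ≠ 0 := by
    rw [Ne, ascPochhammer_eval_eq_zero_iff]
    rintro ⟨l, -, hl⟩
    exact hc (l + i) (by push_cast; linear_combination hl)
  rw [show s - c + 1 = (s + n) + (1 - c - n) by ring, ascPochhammer_eval_add, mul_sum, sum_div]
  refine sum_congr rfl fun ⟨i, j⟩ hij ↦ ?_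
  obtain rfl : i + j = n := mem_antidiagonal.mp hij
  have h_reflect : (ascPochhammer K j).eval (1 - c - (i + j : ℕ)) =
      (-1) ^ j * (ascPochhammer K j).eval (c + i) := by
    rw [neg_one_pow_mul_ascPochhammer_eval]
    push_cast
    ring_nf
  have h_choose : ((i + j).choose i : K) * (i ! * j !) = ((i + j)! : ℕ) := by
    rw [← Nat.add_choose_mul_factorial_mul_factorial i j, Nat.choose_symm_add]
    push_cast
    ring
  have hc_i : (ascPochhammer K i).eval c ≠ 0 := by simpa using hc_ne i 0
  have hi : (i ! : K) ≠ 0 := mod_cast i.factorial_ne_zero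
  have hj : (j ! : K) ≠ 0 := mod_cast j.factorial_ne_zero
  rw [h_reflect, ← h_choose, ← ascPochhammer_eval_mul_eval_add i j c,
    show 2 * i + j = (i + j) + i by ring, ← ascPochhammer_eval_mul_eval_add (i + j) i s]
  have h_choose_ne : ((i + j).choose i : K) ≠ 0 := mod_cast Nat.choose_ne_zero (by lia)
  have hc_ij := hc_ne j i
  field_simp

end Pochhammer

section Hypergeometric

open Polynomial
open scoped Nat ENNReal

theorem hyperF_eq_ordinaryHypergeometric (a b c x : ℝ) : hyperF a b c x = ₂F₁ a b c x := by
  rw [hyperF, ordinaryHypergeometric_eq_tsum]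
  refine tsum_congr fun k ↦ ?_
  rw [smul_eq_mul]
  ring

theorem one_le_ordinaryHypergeometricSeries_radius {𝕂 : Type*} (𝔸 : Type*) [RCLike 𝕂]
    [NormedDivisionRing 𝔸] [NormedAlgebra 𝕂 𝔸] (a b c : 𝕂) :
    1 ≤ (ordinaryHypergeometricSeries 𝔸 a b c).radius := by
  by_cases! h : ∀ k : ℕ, (k : 𝕂) ≠ -a ∧ (k : 𝕂) ≠ -b ∧ (k : 𝕂) ≠ -c
  · exact (ordinaryHypergeometricSeries_radius_eq_one 𝔸 a b c h).ge
  · obtain ⟨k, hk⟩ := h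
    have h_cases : a = -k ∨ b = -k ∨ c = -k := by
      by_contra! h_ne
      refine h_ne.2.2 (neg_eq_iff_eq_neg.mp (hk ?_ ?_).symm)
      · exact fun h ↦ h_ne.1 (neg_eq_iff_eq_neg.mp h.symm)
      · exact fun h ↦ h_ne.2.1 (neg_eq_iff_eq_neg.mp h.symm)
    rcases h_cases with rfl | rfl | rfl
    · exact le_top.trans_eq (ordinaryHypergeometric_radius_top_of_neg_nat₁ 𝔸 b c).symm
    · exact le_top.trans_eq (ordinaryHypergeometric_radius_top_of_neg_nat₂ 𝔸 a c).symm
    · exact le_top.trans_eq (ordinaryHypergeometric_radius_top_of_neg_nat₃ 𝔸 a b).symm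

theorem mem_eball_zero_one_iff {E : Type*} [SeminormedAddCommGroup E] {x : E} :
    x ∈ eball (0 : E) 1 ↔ ‖x‖ < 1 := by
  rw [← ENNReal.ofReal_one, eball_ofReal, mem_ball_zero_iff]

theorem hasFPowerSeriesOnBall_ordinaryHypergeometric (a b c : ℝ) :
    HasFPowerSeriesOnBall (₂F₁ a b c : ℝ → ℝ) (ordinaryHypergeometricSeries ℝ a b c) 0 1 :=
  have h_radius := one_le_ordinaryHypergeometricSeries_radius ℝ a b c
  (FormalMultilinearSeries.hasFPowerSeriesOnBall _ (one_pos.trans_le h_radius)).mono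
    one_pos h_radius

theorem analyticAt_ordinaryHypergeometric (a b c : ℝ) {x : ℝ} (hx : |x| < 1) :
    AnalyticAt ℝ (₂F₁ a b c : ℝ → ℝ) x :=
  (hasFPowerSeriesOnBall_ordinaryHypergeometric a b c).analyticAt_of_mem
    (mem_eball_zero_one_iff.mpr hx)

theorem hasSum_ordinaryHypergeometric (a b c : ℝ) {x : ℝ} (hx : |x| < 1) :
    HasSum (fun n ↦ ordinaryHypergeometricCoefficient a b c n * x ^ n) (₂F₁ a b c x) := by
  have h := (hasFPowerSeriesOnBall_ordinaryHypergeometric a b c).hasSum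
    (mem_eball_zero_one_iff.mpr hx)
  simpa only [zero_add, ordinaryHypergeometricSeries_apply_eq, smul_eq_mul] using h

theorem hasSum_one_sub_rpow_neg (s : ℝ) {x : ℝ} (hx : |x| < 1) :
    HasSum (fun n ↦ (ascPochhammer ℝ n).eval s / n ! * x ^ n) ((1 - x) ^ (-s)) := by
  have h := (one_div_one_sub_rpow_hasFPowerSeriesOnBall_zero s).hasSum
    (mem_eball_zero_one_iff.mpr hx)
  have h_coeff (n : ℕ) : (ascPochhammer ℝ n).eval s / n ! = Ring.choose (s + n - 1) n := by
    rw [← Ring.multichoose_eq, div_eq_iff (by positivity), mul_comm, ← nsmul_eq_mul,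
      Ring.factorial_nsmul_multichoose_eq_ascPochhammer, ascPochhammer_smeval_eq_eval]
  rw [rpow_neg (by linarith [(abs_lt.mp hx).2])]
  simpa only [zero_add, one_div, FormalMultilinearSeries.ofScalars_apply_eq, smul_eq_mul,
    h_coeff] using h

end Hypergeometric

section QuadraticTransformation

open Finset Polynomial
open scoped Nat Topology

theorem hasSum_sum_antidiagonal {A M : Type*} [AddMonoid A] [HasAntidiagonal A] [AddCommMonoid M]
    [TopologicalSpace M] [ContinuousAdd M] [RegularSpace M] {f : A × A → M} {a : M}
    (hf : HasSum f a) : HasSum (fun n ↦ ∑ ij ∈ antidiagonal n, f ij) a := by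
  refine (HasAntidiagonal.sigmaAntidiagonalEquivProd.hasSum_iff.mpr hf).sigma fun n ↦ ?_
  simpa [Function.comp_def] using (antidiagonal n).hasSum f

theorem hasSum_ascPochhammer_eval_add (m : ℕ) (s : ℝ) {x : ℝ} (hx : |x| < 1) :
    HasSum (fun j ↦ (ascPochhammer ℝ (m + j)).eval s / j ! * x ^ j)
      ((ascPochhammer ℝ m).eval s * (1 - x) ^ (-(s + m))) := by
  refine ((hasSum_one_sub_rpow_neg (s + m) hx).mul_left _).congr_fun fun j ↦ ?_
  rw [← ascPochhammer_eval_mul_eval_add]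
  ring

/-- The terms of the double series whose sums along rows and along antidiagonals are the two sides
of Gauss's quadratic transformation, when `x = -q`. The variable `x` is kept separate so that the
same terms, with `s`, `q`, `x` replaced by absolute values, serve as a majorant. -/
noncomputable def gaussTerm (s c q x : ℝ) (kj : ℕ × ℕ) : ℝ :=
  q ^ kj.1 / (kj.1 ! * (ascPochhammer ℝ kj.1).eval c) *
    ((ascPochhammer ℝ (2 * kj.1 + kj.2)).eval s / kj.2 ! * x ^ kj.2)

theorem gaussTerm_row_sum_eq (s c q : ℝ) {x : ℝ} (hx : x < 1) (k : ℕ) :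
    q ^ k / (k ! * (ascPochhammer ℝ k).eval c) *
        ((ascPochhammer ℝ (2 * k)).eval s * (1 - x) ^ (-(s + (2 * k : ℕ)))) =
      (1 - x) ^ (-s) * (ordinaryHypergeometricCoefficient (s / 2) ((s + 1) / 2) c k *
        (4 * q / (1 - x) ^ 2) ^ k) := by
  rw [neg_add, ← sub_eq_add_neg, rpow_sub_natCast (sub_pos.mpr hx).ne', pow_mul,
    ascPochhammer_eval_two_mul, div_pow, mul_pow]
  ring

theorem hasSum_gaussTerm_row (s c q : ℝ) {x : ℝ} (hx : |x| < 1) (k : ℕ) :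
    HasSum (fun j ↦ gaussTerm s c q x (k, j))
      ((1 - x) ^ (-s) * (ordinaryHypergeometricCoefficient (s / 2) ((s + 1) / 2) c k *
        (4 * q / (1 - x) ^ 2) ^ k)) := by
  rw [← gaussTerm_row_sum_eq s c q (lt_of_abs_lt hx)]
  exact (hasSum_ascPochhammer_eval_add (2 * k) s hx).mul_left _

theorem sum_antidiagonal_gaussTerm {c : ℝ} (hc : ∀ k : ℕ, (k : ℝ) ≠ -c) (s q : ℝ) (n : ℕ) :
    ∑ kj ∈ antidiagonal n, gaussTerm s c q (-q) kj =
      ordinaryHypergeometricCoefficient s (s - c + 1) c n * q ^ n := by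
  calc ∑ kj ∈ antidiagonal n, gaussTerm s c q (-q) kj
      = (∑ kj ∈ antidiagonal n, (-1) ^ kj.2 * (ascPochhammer ℝ (2 * kj.1 + kj.2)).eval s /
          (kj.1 ! * (ascPochhammer ℝ kj.1).eval c * kj.2 !)) * q ^ n := by
        rw [sum_mul]
        refine sum_congr rfl fun ⟨k, j⟩ hkj ↦ ?_
        obtain rfl : k + j = n := mem_antidiagonal.mp hkj
        rw [gaussTerm, neg_pow q, pow_add]
        ring
    _ = _ := by
        rw [sum_antidiagonal_ascPochhammer_two_mul_add hc]
        ring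

theorem abs_gaussTerm_le (s c q x : ℝ) (kj : ℕ × ℕ) :
    |gaussTerm s c q x kj| ≤ |gaussTerm |s| c q |x| kj| := by
  simp only [gaussTerm, abs_mul, abs_div, Nat.abs_cast, abs_pow, abs_abs]
  gcongr _ * (?_ / _ * _)
  exact (abs_ascPochhammer_eval_le _ s).trans (le_abs_self _)

theorem hasSum_abs_gaussTerm_row (s c q : ℝ) {x : ℝ} (hx : |x| < 1) (k : ℕ) :
    HasSum (fun j ↦ |gaussTerm |s| c q |x| (k, j)|)
      |(1 - |x|) ^ (-|s|) * (ordinaryHypergeometricCoefficient (|s| / 2) ((|s| + 1) / 2) c k *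
        (4 * q / (1 - |x|) ^ 2) ^ k)| := by
  have h_nonneg (j : ℕ) : 0 ≤ (ascPochhammer ℝ (2 * k + j)).eval |s| / j ! * |x| ^ j := by
    have := ascPochhammer_eval_abs_nonneg (2 * k + j) s
    positivity
  have h_sum := hasSum_ascPochhammer_eval_add (2 * k) |s| ((abs_abs x).trans_lt hx)
  rw [← gaussTerm_row_sum_eq |s| c q hx, abs_mul, abs_of_nonneg (h_sum.nonneg h_nonneg)]
  simpa only [gaussTerm, abs_mul, abs_of_nonneg (h_nonneg _)] using h_sum.mul_left _

theorem abs_four_mul_div_sq_lt_one {q r : ℝ} (h : 4 * |q| < r ^ 2) : |4 * q / r ^ 2| < 1 := by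
  rw [abs_div, abs_mul, abs_of_pos (four_pos : (0 : ℝ) < 4), abs_sq]
  exact (div_lt_one ((by positivity : 0 ≤ 4 * |q|).trans_lt h)).mpr h

theorem summable_gaussTerm (s c : ℝ) {q x : ℝ} (hx : |x| < 1) (hq : 4 * |q| < (1 - |x|) ^ 2) :
    Summable (gaussTerm s c q x) := by
  suffices Summable fun kj ↦ |gaussTerm |s| c q |x| kj| from
    this.of_norm_bounded (abs_gaussTerm_le s c q x)
  have h_row := hasSum_abs_gaussTerm_row s c q hx
  refine (summable_prod_of_nonneg fun _ ↦ abs_nonneg _).mpr ⟨fun k ↦ (h_row k).summable, ?_⟩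
  simp only [(h_row _).tsum_eq, abs_mul]
  simpa only [abs_mul] using (hasSum_ordinaryHypergeometric (|s| / 2) ((|s| + 1) / 2) c
    (abs_four_mul_div_sq_lt_one hq)).summable.abs.mul_left _

theorem ordinaryHypergeometric_quadratic_of_small {c : ℝ} (hc : ∀ k : ℕ, (k : ℝ) ≠ -c) (s : ℝ)
    {q : ℝ} (hq₁ : |q| < 1) (hq : 4 * |q| < (1 - |q|) ^ 2) :
    ₂F₁ s (s - c + 1) c q =
      (1 + q) ^ (-s) * ₂F₁ (s / 2) ((s + 1) / 2) c (4 * q / (1 + q) ^ 2) := by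
  have hx : |-q| < 1 := by rwa [abs_neg]
  have hQ : 4 * |q| < (1 + q) ^ 2 :=
    hq.trans_le (pow_le_pow_left₀ (by linarith) (by linarith [neg_abs_le q]) 2)
  have h_sum : HasSum (gaussTerm s c q (-q)) _ :=
    (summable_gaussTerm s c hx (by rwa [abs_neg])).hasSum
  have h_antidiagonal := hasSum_sum_antidiagonal h_sum
  have h_rows := h_sum.prod_fiberwise (hasSum_gaussTerm_row s c q hx)
  simp only [sum_antidiagonal_gaussTerm hc] at h_antidiagonal
  simp only [sub_neg_eq_add] at h_rows
  calc ₂F₁ s (s - c + 1) c q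
      = ∑' kj, gaussTerm s c q (-q) kj :=
        (hasSum_ordinaryHypergeometric s (s - c + 1) c hq₁).unique h_antidiagonal
    _ = _ := h_rows.unique
        ((hasSum_ordinaryHypergeometric _ _ c (abs_four_mul_div_sq_lt_one hQ)).mul_left _)

theorem four_mul_abs_lt_one_add_sq {q : ℝ} (hq : q ∈ Set.Ioo (2 * √2 - 3) 1) :
    4 * |q| < (1 + q) ^ 2 := by
  have h_sqrt : √2 ^ 2 = 2 := sq_sqrt zero_le_two
  rcases abs_cases q with ⟨h, -⟩ | ⟨h, -⟩ <;> rw [h]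
  · nlinarith [hq.2]
  · nlinarith [hq.1, sqrt_nonneg 2]

/-- `2 * √2 - 3` is the root of `(1 + q) ^ 2 = -4 * q` at which the argument on the right reaches
`-1`. -/
theorem ordinaryHypergeometric_quadratic {c : ℝ} (hc : ∀ k : ℕ, (k : ℝ) ≠ -c) (s : ℝ)
    {q : ℝ} (hq : q ∈ Set.Ioo (2 * √2 - 3) 1) :
    ₂F₁ s (s - c + 1) c q =
      (1 + q) ^ (-s) * ₂F₁ (s / 2) ((s + 1) / 2) c (4 * q / (1 + q) ^ 2) := by
  have h_sqrt : 1 < √2 ∧ √2 < 3 / 2 :=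
    ⟨lt_sqrt_of_sq_lt (by norm_num), (sqrt_lt' (by norm_num)).mpr (by norm_num)⟩
  have h_left : AnalyticOnNhd ℝ (₂F₁ s (s - c + 1) c : ℝ → ℝ) (Set.Ioo (2 * √2 - 3) 1) :=
    fun t ht ↦ analyticAt_ordinaryHypergeometric _ _ _ (abs_lt.mpr ⟨by linarith [ht.1], ht.2⟩)
  have h_right : AnalyticOnNhd ℝ (fun t ↦ (1 + t) ^ (-s) *
      ₂F₁ (s / 2) ((s + 1) / 2) c (4 * t / (1 + t) ^ 2)) (Set.Ioo (2 * √2 - 3) 1) := by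
    intro t ht
    have ht₀ : 0 < 1 + t := by linarith [ht.1]
    have h_arg : AnalyticAt ℝ (fun t : ℝ ↦ 4 * t / (1 + t) ^ 2) t := by
      fun_prop (disch := positivity)
    have h_rpow : AnalyticAt ℝ (fun t : ℝ ↦ (1 + t) ^ (-s)) t :=
      (ContDiffAt.rpow_const_of_ne (by fun_prop) ht₀.ne').analyticAt
    exact h_rpow.mul <| AnalyticAt.fun_comp (analyticAt_ordinaryHypergeometric _ _ c
      (abs_four_mul_div_sq_lt_one (four_mul_abs_lt_one_add_sq ht))) h_arg
  have h_near : ∀ᶠ t : ℝ in 𝓝 0, |t| < 1 ∧ 4 * |t| < (1 - |t|) ^ 2 :=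
    ((isOpen_lt (by fun_prop) (by fun_prop)).and
      (isOpen_lt (by fun_prop) (by fun_prop))).mem_nhds (by simp)
  exact h_left.eqOn_of_preconnected_of_eventuallyEq h_right isPreconnected_Ioo
    (z₀ := 0) ⟨by linarith, one_pos⟩
    (h_near.mono fun t ht ↦ ordinaryHypergeometric_quadratic_of_small hc s ht.1 ht.2) hq

end QuadraticTransformation

section SphereMoments

open Module Real
open scoped RealInnerProductSpace

variable {E : Type*} [NormedAddCommGroup E] [MeasurableSpace E] [BorelSpace E] [Nontrivial E]
  (μ : Measure E) [μ.IsAddHaarMeasure]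

section NormedSpace

variable [NormedSpace ℝ E] [FiniteDimensional ℝ E]

theorem integral_mul_fun_norm_of_homogeneous {f : E → ℝ} {k : ℕ}
    (hf : ∀ r : ℝ, ∀ x, f (r • x) = r ^ k * f x) (g : ℝ → ℝ) :
    ∫ x, f x * g ‖x‖ ∂μ = (∫ ζ : sphere (0 : E) 1, f ζ ∂μ.toSphere) *
      ∫ r in Ioi (0 : ℝ), r ^ (finrank ℝ E - 1 + k) * g r :=
  calc
    ∫ x, f x * g ‖x‖ ∂μ = ∫ x : ({0}ᶜ : Set E), f x * g ‖x.1‖ ∂(μ.comap (↑)) := by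
      rw [integral_subtype_comap (measurableSet_singleton _).compl fun x ↦ f x * g ‖x‖,
        restrict_compl_singleton]
    _ = ∫ x : ({0}ᶜ : Set E), f (‖x.1‖⁻¹ • x.1) * (‖x.1‖ ^ k * g ‖x.1‖) ∂(μ.comap (↑)) := by
      refine integral_congr_ae (.of_forall fun x ↦ ?_)
      have hx : ‖x.1‖ ≠ 0 := norm_ne_zero_iff.mpr x.2
      beta_reduce
      rw [hf, inv_pow]
      field_simp
    _ = ∫ p, f p.1 * (p.2.1 ^ k * g p.2)
          ∂μ.toSphere.prod (.volumeIoiPow (finrank ℝ E - 1)) := by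
      simpa using μ.measurePreserving_homeomorphUnitSphereProd.integral_comp
        (Homeomorph.measurableEmbedding _)
        fun p : sphere (0 : E) 1 × Ioi (0 : ℝ) ↦ f p.1 * (p.2.1 ^ k * g p.2)
    _ = (∫ ζ : sphere (0 : E) 1, f ζ ∂μ.toSphere) *
          ∫ r : Ioi (0 : ℝ), r.1 ^ k * g r ∂.volumeIoiPow (finrank ℝ E - 1) :=
      integral_prod_mul (fun ζ : sphere (0 : E) 1 ↦ f ζ) fun r : Ioi (0 : ℝ) ↦ r.1 ^ k * g r
    _ = _ := by
      simp only [Measure.volumeIoiPow, ENNReal.ofReal]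
      rw [integral_withDensity_eq_integral_smul
          (measurable_subtype_coe.pow_const _).real_toNNReal,
        integral_subtype_comap measurableSet_Ioi
          fun r ↦ Real.toNNReal (r ^ (finrank ℝ E - 1)) • (r ^ k * g r),
        setIntegral_congr_fun measurableSet_Ioi fun r hr ↦ ?_]
      rw [NNReal.smul_def, Real.coe_toNNReal _ (pow_nonneg hr.out.le _), smul_eq_mul, pow_add,
        mul_assoc]

theorem integrable_norm_pow_mul_exp_neg_norm_sq (k : ℕ) :
    Integrable (fun x : E ↦ ‖x‖ ^ k * exp (-‖x‖ ^ 2)) μ := by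
  refine (integrable_fun_norm_addHaar μ (f := fun r ↦ r ^ k * exp (-r ^ 2))).mpr ?_
  have h := integrableOn_rpow_mul_exp_neg_mul_sq one_pos
    (s := (finrank ℝ E - 1 + k : ℕ)) (neg_one_lt_zero.trans_le (Nat.cast_nonneg _))
  simpa only [rpow_natCast, neg_mul, one_mul, smul_eq_mul, pow_add, mul_assoc] using h

end NormedSpace

variable [InnerProductSpace ℝ E] [FiniteDimensional ℝ E]

theorem integrable_inner_pow_mul_exp_neg_norm_sq (y : E) (k : ℕ) :
    Integrable (fun x : E ↦ ⟪y, x⟫ ^ k * exp (-‖x‖ ^ 2)) μ := by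
  refine ((integrable_norm_pow_mul_exp_neg_norm_sq μ k).const_mul (‖y‖ ^ k)).mono'
    (by fun_prop) (.of_forall fun x ↦ ?_)
  rw [norm_mul, norm_pow, norm_of_nonneg (exp_nonneg _), ← mul_assoc, ← mul_pow]
  gcongr
  exact norm_inner_le_norm y x

theorem integral_inner_pow_add_two_mul_exp_neg_norm_sq (y : E) (k : ℕ) :
    2 * ∫ x, ⟪y, x⟫ ^ (k + 2) * exp (-‖x‖ ^ 2) ∂μ =
      (k + 1) * ‖y‖ ^ 2 * ∫ x, ⟪y, x⟫ ^ k * exp (-‖x‖ ^ 2) ∂μ := by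
  have h_inner (x : E) : HasFDerivAt (fun x : E ↦ ⟪y, x⟫ ^ (k + 1))
      (((k + 1 : ℕ) * ⟪y, x⟫ ^ k) • innerSL ℝ y) x := by
    simpa using ((innerSL ℝ y).hasFDerivAt (x := x)).pow (k + 1)
  have h_exp (x : E) : HasFDerivAt (fun x : E ↦ exp (-‖x‖ ^ 2))
      (exp (-‖x‖ ^ 2) • -((2 : ℕ) • innerSL ℝ x : E →L[ℝ] ℝ)) x :=
    (hasStrictFDerivAt_norm_sq x).hasFDerivAt.neg.exp
  have h_inner' (x : E) : fderiv ℝ (fun x : E ↦ ⟪y, x⟫ ^ (k + 1)) x y * exp (-‖x‖ ^ 2) =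
      (k + 1) * ‖y‖ ^ 2 * (⟪y, x⟫ ^ k * exp (-‖x‖ ^ 2)) := by
    rw [(h_inner x).fderiv, smul_apply, innerSL_apply_apply, real_inner_self_eq_norm_sq,
      smul_eq_mul]
    push_cast
    ring
  have h_exp' (x : E) : ⟪y, x⟫ ^ (k + 1) * fderiv ℝ (fun x : E ↦ exp (-‖x‖ ^ 2)) x y =
      -2 * (⟪y, x⟫ ^ (k + 2) * exp (-‖x‖ ^ 2)) := by
    rw [(h_exp x).fderiv, smul_apply, neg_apply, smul_apply, innerSL_apply_apply,
      real_inner_comm, smul_eq_mul, nsmul_eq_mul]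
    push_cast
    ring
  have h_parts := integral_mul_fderiv_eq_neg_fderiv_mul_of_integrable (μ := μ) (v := y)
    (f := fun x : E ↦ ⟪y, x⟫ ^ (k + 1)) (g := fun x : E ↦ exp (-‖x‖ ^ 2))
    (by simpa only [h_inner'] using
      (integrable_inner_pow_mul_exp_neg_norm_sq μ y k).const_mul _)
    (by simpa only [h_exp'] using
      (integrable_inner_pow_mul_exp_neg_norm_sq μ y (k + 2)).const_mul _)
    (integrable_inner_pow_mul_exp_neg_norm_sq μ y (k + 1))
    (fun x _ ↦ (h_inner x).differentiableAt) (fun x _ ↦ (h_exp x).differentiableAt)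
  simp only [h_inner', h_exp', integral_const_mul] at h_parts
  linarith

theorem integral_inner_pow_mul_exp_neg_norm_sq (y : E) (k : ℕ) :
    ∫ x, ⟪y, x⟫ ^ k * exp (-‖x‖ ^ 2) ∂μ =
      (∫ ζ : sphere (0 : E) 1, ⟪y, ζ⟫ ^ k ∂μ.toSphere) *
        (Gamma ((finrank ℝ E + k) / 2) / 2) := by
  have h_dim : 0 < finrank ℝ E := finrank_pos
  have h_radial := integral_rpow_mul_exp_neg_rpow two_pos
    (q := (finrank ℝ E - 1 + k : ℕ)) (neg_one_lt_zero.trans_le (Nat.cast_nonneg _))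
  have h_exponent : ((finrank ℝ E - 1 + k : ℕ) : ℝ) + 1 = finrank ℝ E + k := by
    norm_cast
    lia
  simp only [rpow_natCast, rpow_two, h_exponent] at h_radial
  rw [integral_mul_fun_norm_of_homogeneous μ (f := fun x ↦ ⟪y, x⟫ ^ k)
    (fun r x ↦ by rw [real_inner_smul_right, mul_pow]) fun r ↦ exp (-r ^ 2), h_radial]
  ring

theorem integral_sphere_inner_pow_of_odd (y : E) {k : ℕ} (hk : Odd k) :
    ∫ ζ : sphere (0 : E) 1, ⟪y, ζ⟫ ^ k ∂μ.toSphere = 0 := by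
  have h_neg := integral_neg_eq_self (fun x : E ↦ ⟪y, x⟫ ^ k * exp (-‖x‖ ^ 2)) μ
  simp only [inner_neg_right, hk.neg_pow, norm_neg, neg_mul, integral_neg] at h_neg
  have h_gauss := integral_inner_pow_mul_exp_neg_norm_sq μ y k
  have h_dim : (0 : ℝ) < finrank ℝ E := mod_cast finrank_pos
  have h_gamma : 0 < Gamma ((finrank ℝ E + k) / 2) := Gamma_pos_of_pos (by positivity)
  rw [self_eq_neg.mp h_neg.symm, eq_comm, mul_eq_zero] at h_gauss
  exact h_gauss.resolve_right (by positivity)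

theorem integral_sphere_inner_pow_add_two (y : E) (k : ℕ) :
    (finrank ℝ E + k) * ∫ ζ : sphere (0 : E) 1, ⟪y, ζ⟫ ^ (k + 2) ∂μ.toSphere =
      (k + 1) * ‖y‖ ^ 2 * ∫ ζ : sphere (0 : E) 1, ⟪y, ζ⟫ ^ k ∂μ.toSphere := by
  have h_dim : (0 : ℝ) < finrank ℝ E := mod_cast finrank_pos
  have h_gamma : 0 < Gamma ((finrank ℝ E + k) / 2) := Gamma_pos_of_pos (by positivity)
  have h_succ : Gamma ((finrank ℝ E + (k + 2 : ℕ)) / 2) =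
      (finrank ℝ E + k) / 2 * Gamma ((finrank ℝ E + k) / 2) := by
    rw [← Gamma_add_one (by positivity)]
    push_cast
    ring_nf
  have h := integral_inner_pow_add_two_mul_exp_neg_norm_sq μ y k
  rw [integral_inner_pow_mul_exp_neg_norm_sq, integral_inner_pow_mul_exp_neg_norm_sq,
    h_succ] at h
  refine mul_right_cancel₀ h_gamma.ne' ?_
  linear_combination 2 * h

theorem integral_sphere_inner_pow_two_mul (y : E) (k : ℕ) :
    ∫ ζ : sphere (0 : E) 1, ⟪y, ζ⟫ ^ (2 * k) ∂μ.toSphere =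
      μ.toSphere.real univ * (‖y‖ ^ (2 * k) * ((ascPochhammer ℝ k).eval (1 / 2) /
        (ascPochhammer ℝ k).eval (finrank ℝ E / 2 : ℝ))) := by
  have h_dim : (0 : ℝ) < finrank ℝ E := mod_cast finrank_pos
  induction k with
  | zero => simp
  | succ k ih =>
    have h := integral_sphere_inner_pow_add_two μ y (2 * k)
    have h_pos := ascPochhammer_pos k (finrank ℝ E / 2 : ℝ) (by positivity)
    rw [ih] at h
    rw [mul_add_one, ascPochhammer_succ_eval, ascPochhammer_succ_eval]
    push_cast at h
    field_simp at h ⊢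
    linear_combination h

end SphereMoments

section SphereMeans

open Module
open scoped RealInnerProductSpace Nat

variable {E : Type*} [NormedAddCommGroup E] [InnerProductSpace ℝ E]

theorem norm_sub_sq_eq_mul_one_sub_inner (y : E) {ζ : E} (hζ : ‖ζ‖ = 1) :
    ‖y - ζ‖ ^ 2 = (1 + ‖y‖ ^ 2) * (1 - ⟪(2 / (1 + ‖y‖ ^ 2)) • y, ζ⟫) := by
  rw [norm_sub_sq_real, hζ, real_inner_smul_left]
  field_simp
  ring

theorem norm_sub_rpow_eq_mul_one_sub_inner_rpow (y : E) {ζ : E} (hζ : ‖ζ‖ = 1) (s : ℝ) :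
    ‖y - ζ‖ ^ (2 * s) =
      (1 + ‖y‖ ^ 2) ^ s * (1 - ⟪(2 / (1 + ‖y‖ ^ 2)) • y, ζ⟫) ^ s := by
  have h := norm_sub_sq_eq_mul_one_sub_inner y hζ
  have h_nonneg : 0 ≤ 1 - ⟪(2 / (1 + ‖y‖ ^ 2)) • y, ζ⟫ :=
    nonneg_of_mul_nonneg_right (h ▸ sq_nonneg _) (by positivity)
  rw [rpow_mul (norm_nonneg _), rpow_two, h, mul_rpow (by positivity) h_nonneg]

theorem hasSum_integral_sphere_one_sub_inner_rpow_neg [MeasurableSpace E]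
    [OpensMeasurableSpace E] [SecondCountableTopology E] (ν : Measure (sphere (0 : E) 1))
    [IsFiniteMeasure ν] (s : ℝ) {a : E} (ha : ‖a‖ < 1) :
    HasSum (fun k ↦ (ascPochhammer ℝ k).eval s / k ! * ∫ ζ, ⟪a, ζ⟫ ^ k ∂ν)
      (∫ ζ, (1 - ⟪a, ζ⟫) ^ (-s) ∂ν) := by
  have h_inner (ζ : sphere (0 : E) 1) : |⟪a, ζ⟫| ≤ ‖a‖ := by
    simpa using abs_real_inner_le_norm a (ζ : E)
  have h_summable : Summable fun k : ℕ ↦ ‖(ascPochhammer ℝ k).eval s / k ! * ‖a‖ ^ k‖ :=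
    (hasSum_one_sub_rpow_neg s (by rwa [abs_norm])).summable.norm
  simp only [← integral_const_mul]
  refine hasSum_integral_of_dominated_convergence
    (fun k _ ↦ ‖(ascPochhammer ℝ k).eval s / k ! * ‖a‖ ^ k‖)
    (fun k ↦ by fun_prop) (fun k ↦ .of_forall fun ζ ↦ ?_) (.of_forall fun _ ↦ h_summable)
    (integrable_const _)
    (.of_forall fun ζ ↦ hasSum_one_sub_rpow_neg s ((h_inner ζ).trans_lt ha))
  simp only [norm_mul, norm_pow, norm_norm]
  gcongr
  exact h_inner ζ

variable [FiniteDimensional ℝ E] [MeasurableSpace E] [BorelSpace E] [Nontrivial E]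
  (μ : Measure E) [μ.IsAddHaarMeasure]

theorem average_sphere_inner_pow_of_odd (y : E) {k : ℕ} (hk : Odd k) :
    ⨍ ζ : sphere (0 : E) 1, ⟪y, ζ⟫ ^ k ∂μ.toSphere = 0 := by
  rw [average_eq, integral_sphere_inner_pow_of_odd μ y hk, smul_zero]

theorem average_sphere_inner_pow_two_mul (y : E) (k : ℕ) :
    ⨍ ζ : sphere (0 : E) 1, ⟪y, ζ⟫ ^ (2 * k) ∂μ.toSphere =
      ‖y‖ ^ (2 * k) * ((ascPochhammer ℝ k).eval (1 / 2) /
        (ascPochhammer ℝ k).eval (finrank ℝ E / 2 : ℝ)) := by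
  have : NeZero μ.toSphere := ⟨μ.toSphere_ne_zero⟩
  rw [average_eq, integral_sphere_inner_pow_two_mul, smul_eq_mul,
    inv_mul_cancel_left₀ measureReal_univ_pos.ne']

theorem ascPochhammer_eval_div_factorial_mul_average_sphere_inner_pow (s : ℝ) (y : E) (k : ℕ) :
    (ascPochhammer ℝ (2 * k)).eval s / (2 * k)! *
        ⨍ ζ : sphere (0 : E) 1, ⟪y, ζ⟫ ^ (2 * k) ∂μ.toSphere =
      ordinaryHypergeometricCoefficient (s / 2) ((s + 1) / 2) (finrank ℝ E / 2 : ℝ) k *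
        (‖y‖ ^ 2) ^ k := by
  have h_factorial : ((2 * k)! : ℝ) = 4 ^ k * ((ascPochhammer ℝ k).eval (1 / 2) * k !) := by
    simpa using ascPochhammer_eval_two_mul k (1 : ℝ)
  have h_half : 0 < (ascPochhammer ℝ k).eval (1 / 2 : ℝ) := ascPochhammer_pos k _ (by norm_num)
  rw [average_sphere_inner_pow_two_mul, h_factorial, ascPochhammer_eval_two_mul, pow_mul]
  field_simp

theorem average_sphere_one_sub_inner_rpow_neg (s : ℝ) {a : E} (ha : ‖a‖ < 1) :
    ⨍ ζ : sphere (0 : E) 1, (1 - ⟪a, ζ⟫) ^ (-s) ∂μ.toSphere =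
      ₂F₁ (s / 2) ((s + 1) / 2) (finrank ℝ E / 2 : ℝ) (‖a‖ ^ 2) := by
  refine (hasSum_integral_sphere_one_sub_inner_rpow_neg _ s ha).unique ?_
  rw [← add_zero (₂F₁ _ _ _ _)]
  refine HasSum.even_add_odd ?_ ?_
  · have h_sq : |‖a‖ ^ 2| < 1 := by rwa [abs_sq, sq_lt_one_iff₀ (norm_nonneg a)]
    simpa only [← ascPochhammer_eval_div_factorial_mul_average_sphere_inner_pow μ, average_eq']
      using hasSum_ordinaryHypergeometric (s / 2) ((s + 1) / 2) (finrank ℝ E / 2) h_sq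
  · have h_odd (k : ℕ) : ⨍ ζ : sphere (0 : E) 1, ⟪a, ζ⟫ ^ (2 * k + 1) ∂μ.toSphere = 0 :=
      average_sphere_inner_pow_of_odd μ a (odd_two_mul_add_one k)
    simpa only [← average_eq', h_odd, mul_zero] using hasSum_zero

theorem integral_sphere_inv_norm_pow_general (s : ℝ) {y : E} (hy : ‖y‖ < 1) :
    ⨍ ζ : sphere (0 : E) 1, ‖y - ζ‖ ^ (-(2 * s)) ∂μ.toSphere =
      hyperF s (s - finrank ℝ E / 2 + 1) (finrank ℝ E / 2) (‖y‖ ^ 2) := by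
  set a : E := (2 / (1 + ‖y‖ ^ 2)) • y with ha
  have h_norm_sq : ‖a‖ ^ 2 = 4 * ‖y‖ ^ 2 / (1 + ‖y‖ ^ 2) ^ 2 := by
    rw [ha, norm_smul, norm_of_nonneg (by positivity), mul_pow, div_pow]
    ring
  have h_sqrt : √2 < 3 / 2 := (sqrt_lt' (by norm_num)).mpr (by norm_num)
  have h_mem : ‖y‖ ^ 2 ∈ Set.Ioo (2 * √2 - 3) 1 :=
    ⟨by linarith [sq_nonneg ‖y‖], (sq_lt_one_iff₀ (norm_nonneg y)).mpr hy⟩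
  have h_lt : ‖a‖ < 1 := by
    rw [← sq_lt_one_iff₀ (norm_nonneg a), h_norm_sq]
    exact lt_of_abs_lt (abs_four_mul_div_sq_lt_one (four_mul_abs_lt_one_add_sq h_mem))
  have h_dim (k : ℕ) : (k : ℝ) ≠ -(finrank ℝ E / 2) := by
    have : (0 : ℝ) < finrank ℝ E := mod_cast finrank_pos
    exact (neg_lt_zero.mpr (by positivity) |>.trans_le k.cast_nonneg).ne'
  calc
    ⨍ ζ : sphere (0 : E) 1, ‖y - ζ‖ ^ (-(2 * s)) ∂μ.toSphere
      = ⨍ ζ : sphere (0 : E) 1, (1 + ‖y‖ ^ 2) ^ (-s) * (1 - ⟪a, ζ⟫) ^ (-s) ∂μ.toSphere := by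
        simp only [← mul_neg, norm_sub_rpow_eq_mul_one_sub_inner_rpow y (norm_eq_of_mem_sphere _),
          ← ha]
    _ = (1 + ‖y‖ ^ 2) ^ (-s) *
          ₂F₁ (s / 2) ((s + 1) / 2) (finrank ℝ E / 2 : ℝ) (‖a‖ ^ 2) := by
        rw [average_eq', integral_const_mul, ← average_eq',
          average_sphere_one_sub_inner_rpow_neg μ s h_lt]
    _ = hyperF s (s - finrank ℝ E / 2 + 1) (finrank ℝ E / 2) (‖y‖ ^ 2) := by
        rw [h_norm_sq, ← ordinaryHypergeometric_quadratic h_dim s h_mem,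
          hyperF_eq_ordinaryHypergeometric]

end SphereMeans

theorem integral_sphere_inv_norm_pow (n : ℕ) (hn : 3 ≤ n) (r : ℝ)
    (hr : r ∈ Ico (0:ℝ) 1) (x : EuclideanSpace ℝ (Fin n)) (hx : ‖x‖ < 1) :
    ∫ ζ : sphere (0 : EuclideanSpace ℝ (Fin n)) 1,
        ‖r • x - (ζ : EuclideanSpace ℝ (Fin n))‖ ^ (-((n : ℝ) + 2))
        ∂(sphereMeasureNormalized n) =
      hyperF (((n : ℝ) + 2) / 2) 2 ((n : ℝ) / 2) (r ^ 2 * ‖x‖ ^ 2) := by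
  have : NeZero n := ⟨by lia⟩
  have h_norm : ‖r • x‖ = r * ‖x‖ := by rw [norm_smul, norm_of_nonneg hr.1]
  have h_lt : ‖r • x‖ < 1 := h_norm ▸ mul_lt_one_of_nonneg_of_lt_one_left hr.1 hr.2 hx.le
  have h := integral_sphere_inv_norm_pow_general volume (((n : ℝ) + 2) / 2) h_lt
  have h_exponent : 2 * (((n : ℝ) + 2) / 2) = n + 2 := by ring
  have h_second : ((n : ℝ) + 2) / 2 - n / 2 + 1 = 2 := by ring
  rwa [finrank_euclideanSpace_fin, h_norm, mul_pow, h_exponent, h_second] at h
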